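/- arXiv:0805.3986 — 4 statements merged into one kernel-verified Lean document; each statement's English description precedes it below -/
import Mathlib

section
/- Let R be a commutative ring, let n be a positive integer, and let u, v, w ∈ R. Then (u^n·w)^n·(u·v^n) + (u·v^n)^n·(v·w^n) + (v·w^n)^n·(u^n·w) = (u·v·w)^n·(u^(n²−n+1) + v^(n²−n+1) + w^(n²−n+1)). In particular, if u^(n²−n+1) + v^(n²−n+1) + w^(n²−n+1) = 0, then (x, y, z) = (u^n·w, u·v^n, v·w^n) satisfies x^n·y + y^n·z + z^n·x = 0. -/
/-- For `n ≥ 1` and `u, v, w` in a commutative ring,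
`(uⁿw)ⁿ(uvⁿ) + (uvⁿ)ⁿ(vwⁿ) + (vwⁿ)ⁿ(uⁿw) = (uvw)ⁿ(u^(n²−n+1) + v^(n²−n+1) + w^(n²−n+1))`.
In particular, if `u^(n²−n+1) + v^(n²−n+1) + w^(n²−n+1) = 0`, then
`(x,y,z) = (uⁿw, uvⁿ, vwⁿ)` satisfies `xⁿy + yⁿz + zⁿx = 0`. -/
theorem stmt_6 (R : Type*) [CommRing R] (n : ℕ) (hn : 0 < n) (u v w : R) :
    (u ^ n * w) ^ n * (u * v ^ n) + (u * v ^ n) ^ n * (v * w ^ n)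
        + (v * w ^ n) ^ n * (u ^ n * w)
      = (u * v * w) ^ n
        * (u ^ (n ^ 2 - n + 1) + v ^ (n ^ 2 - n + 1) + w ^ (n ^ 2 - n + 1)) ∧
    (u ^ (n ^ 2 - n + 1) + v ^ (n ^ 2 - n + 1) + w ^ (n ^ 2 - n + 1) = 0 →
      (u ^ n * w) ^ n * (u * v ^ n) + (u * v ^ n) ^ n * (v * w ^ n)
        + (v * w ^ n) ^ n * (u ^ n * w) = 0) := by
  have key : ∀ a : R, a ^ n * a ^ (n ^ 2 - n + 1) = (a ^ n) ^ n * a := by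
    intro a
    have h : n ≤ n ^ 2 := Nat.le_self_pow (by norm_num) n
    rw [← pow_add, ← pow_mul, ← pow_succ]
    congr 1
    rw [← sq]
    omega
  have main : (u ^ n * w) ^ n * (u * v ^ n) + (u * v ^ n) ^ n * (v * w ^ n)
        + (v * w ^ n) ^ n * (u ^ n * w)
      = (u * v * w) ^ n
        * (u ^ (n ^ 2 - n + 1) + v ^ (n ^ 2 - n + 1) + w ^ (n ^ 2 - n + 1)) := by
    have hu := key u
    have hv := key v
    have hw := key w
    simp only [mul_pow]
    generalize u ^ (n ^ 2 - n + 1) = U at *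
    generalize v ^ (n ^ 2 - n + 1) = V at *
    generalize w ^ (n ^ 2 - n + 1) = W at *
    linear_combination (-(v ^ n * w ^ n)) * hu - (u ^ n * w ^ n) * hv - (u ^ n * v ^ n) * hw
  exact ⟨main, fun h => by rw [main, h, mul_zero]⟩
end

section
/- Let k be an algebraically closed field of characteristic p ≥ 3, let a, b be positive integers, let m = lcm(a, b), and suppose there exists a positive integer ν with p^ν ≡ −1 (mod m). Then the double cover X_{a,b} of the affine plane defined by z² = (x^a − 1)·(y^b − 1) is unirational; that is, there exists an injective k-algebra homomorphism from the fraction field of the integral domain k[x, y, z]/(z² − (x^a − 1)·(y^b − 1)) into the fraction field of the polynomial ring k[t₁, t₂] in two variables over k. -/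
open MvPolynomial

/-- The defining polynomial `z² − (xᵃ − 1)(yᵇ − 1)` of the double cover `X_{a,b}`. -/
noncomputable abbrev xabPoly (k : Type*) [CommRing k] (a b : ℕ) : MvPolynomial (Fin 3) k :=
  (X 2 : MvPolynomial (Fin 3) k) ^ 2 - (X 0 ^ a - 1) * (X 1 ^ b - 1)

/-- The coordinate ring `k[x, y, z]/(z² − (xᵃ − 1)(yᵇ − 1))` of `X_{a,b}`. -/
abbrev XabRing (k : Type*) [CommRing k] (a b : ℕ) : Type _ :=
  MvPolynomial (Fin 3) k ⧸ Ideal.span {xabPoly k a b}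


lemma xab_reduce (k : Type*) [Field k] (a b : ℕ) (f : MvPolynomial (Fin 3) k) :
    ∃ f0 f1 : MvPolynomial (Fin 2) k,
      f - (rename ![0, 1] f0 + rename ![0, 1] f1 * X 2) ∈ Ideal.span {xabPoly k a b} := by
  induction f using MvPolynomial.induction_on with
  | C c => exact ⟨C c, 0, by simp⟩
  | add p q hp hq =>
    obtain ⟨p0, p1, h⟩ := hp
    obtain ⟨q0, q1, h'⟩ := hq
    refine ⟨p0 + q0, p1 + q1, ?_⟩
    convert! Ideal.add_mem _ h h' using 1
    simp only [map_add]; ring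
  | mul_X p i hp =>
    obtain ⟨p0, p1, h⟩ := hp
    have hi := Ideal.mul_mem_right (X i) _ h
    fin_cases i
    · refine ⟨p0 * X 0, p1 * X 0, ?_⟩
      convert! hi using 1
      simp; ring
    · refine ⟨p0 * X 1, p1 * X 1, ?_⟩
      convert! hi using 1
      simp; ring
    · refine ⟨p1 * ((X 0 ^ a - 1) * (X 1 ^ b - 1)), p0, ?_⟩
      have h2 : rename ![0, 1] p1 * xabPoly k a b ∈ Ideal.span {xabPoly k a b} :=
        Ideal.mul_mem_left _ _ (Ideal.subset_span rfl)
      convert! Ideal.add_mem _ hi h2 using 1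
      simp [xabPoly]; ring

lemma xab_nonsq (k : Type*) [Field k] (a b : ℕ) (ha : (a : k) ≠ 0) (hb : 0 < b)
    (f0 f1 : MvPolynomial (Fin 2) k)
    (h : f0 ^ 2 = f1 ^ 2 * ((X 0 ^ a - 1) * (X 1 ^ b - 1))) : f1 = 0 := by
  by_contra hf1
  have ha0 : a ≠ 0 := by rintro rfl; simp at ha
  have hG : (X 0 : MvPolynomial (Fin 1) k) ^ b - 1 ≠ 0 := by
    intro h0
    have := congrArg (MvPolynomial.eval (fun _ => (0 : k))) h0
    simp [hb.ne'] at this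
  set e := finSuccEquiv k 1
  have hF1 : e f1 ≠ 0 := by simpa using hf1
  have he : e f0 ^ 2 = e f1 ^ 2 * ((Polynomial.X ^ a - 1) * Polynomial.C (X 0 ^ b - 1)) := by
    have := congrArg e h
    have h1 : e (X 0) = Polynomial.X := finSuccEquiv_X_zero
    have h2 : e (X 1) = Polynomial.C (X 0) := finSuccEquiv_X_succ (j := 0)
    simpa [h1, h2] using this
  have hP : (Polynomial.X ^ a - 1 : Polynomial (MvPolynomial (Fin 1) k)) ≠ 0 := by
    simpa using Polynomial.X_pow_sub_C_ne_zero (Nat.pos_of_ne_zero ha0) (1 : MvPolynomial (Fin 1) k)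
  have hC : (Polynomial.C ((X 0 : MvPolynomial (Fin 1) k) ^ b - 1)) ≠ 0 := Polynomial.C_ne_zero.2 hG
  have hr : Polynomial.rootMultiplicity 1
      (Polynomial.X ^ a - 1 : Polynomial (MvPolynomial (Fin 1) k)) = 1 := by
    apply le_antisymm
    · rw [← not_lt, Polynomial.one_lt_rootMultiplicity_iff_isRoot hP]
      rintro ⟨-, h2⟩
      have h3 : ((a : ℕ) : MvPolynomial (Fin 1) k) = 0 := by
        simpa [Polynomial.derivative_X_pow] using h2
      rw [← map_natCast (C : k →+* MvPolynomial (Fin 1) k), map_eq_zero_iff _ (C_injective _ _)] at h3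
      exact ha h3
    · rw [Nat.one_le_iff_ne_zero, ← Nat.pos_iff_ne_zero, Polynomial.rootMultiplicity_pos hP]
      simp
  have hF0 : e f0 ≠ 0 := by
    intro h0
    rw [h0] at he
    have : e f1 ^ 2 * ((Polynomial.X ^ a - 1) * Polynomial.C (X 0 ^ b - 1)) ≠ 0 :=
      mul_ne_zero (pow_ne_zero _ hF1) (mul_ne_zero hP hC)
    exact this (by rw [← he]; simp)
  have := congrArg (Polynomial.rootMultiplicity 1) he
  rw [pow_two, pow_two, Polynomial.rootMultiplicity_mul (mul_ne_zero hF0 hF0),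
    Polynomial.rootMultiplicity_mul
      (mul_ne_zero (mul_ne_zero hF1 hF1) (mul_ne_zero hP hC)),
    Polynomial.rootMultiplicity_mul (mul_ne_zero hF1 hF1),
    Polynomial.rootMultiplicity_mul (mul_ne_zero hP hC), hr, Polynomial.rootMultiplicity_C] at this
  omega

lemma xab_indep {k K : Type*} [Field k] [Field K] [Algebra k K] (E s A r x y : K) (q c d : ℕ)
    (hq : 1 < q) (hc : 0 < c) (hd : 0 < d)
    (hb : IsTranscendenceBasis k ![E, s])
    (hA1 : A ≠ 1) (hr1 : r ≠ 1) (hrq : r ^ q + r ≠ 0) (h2 : (2 : K) ≠ 0)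
    (hx : x = (A + 1) / (A - 1)) (hy : y = (r + 1) / (r - 1))
    (hE : E = A - r * s ^ (q + 1))
    (hs : (r ^ q + r) * s ^ (q * (q + 1)) = A ^ q + A) :
    AlgebraicIndependent k ![x ^ c, y ^ d] := by
  have hA1' := sub_ne_zero.2 hA1
  have hr1' := sub_ne_zero.2 hr1
  set S := Algebra.adjoin k (Set.range ![x ^ c, y ^ d]) with hS
  have mob : ∀ u v : K, u - 1 ≠ 0 → v = (u + 1) / (u - 1) → IsAlgebraic S v → IsAlgebraic S u := by
    intro u v hu hv h
    have hv1 : v - 1 = 2 / (u - 1) := by rw [hv]; field_simp; ring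
    have hv1' : v - 1 ≠ 0 := by rw [hv1]; exact div_ne_zero h2 hu
    have : u = (v + 1) * (v - 1)⁻¹ := by
      rw [hv1, hv]; field_simp; ring
    rw [this]
    exact (h.add isAlgebraic_one).mul (h.sub isAlgebraic_one).inv
  have hxc : IsAlgebraic S (x ^ c) :=
    isAlgebraic_algebraMap (⟨x ^ c, Algebra.subset_adjoin ⟨0, rfl⟩⟩ : S)
  have hyd : IsAlgebraic S (y ^ d) :=
    isAlgebraic_algebraMap (⟨y ^ d, Algebra.subset_adjoin ⟨1, rfl⟩⟩ : S)
  have hAa := mob A x hA1' hx (hxc.of_pow hc)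
  have hra := mob r y hr1' hy (hyd.of_pow hd)
  have hsa : IsAlgebraic S s := by
    refine IsAlgebraic.of_pow (n := q * (q + 1)) (by positivity) ?_
    have : s ^ (q * (q + 1)) = (A ^ q + A) * (r ^ q + r)⁻¹ := by
      rw [← hs]; field_simp
    rw [this]
    exact ((hAa.pow _).add hAa).mul ((hra.pow _).add hra).inv
  have hEa : IsAlgebraic S E := by
    rw [hE]
    exact hAa.sub (hra.mul (hsa.pow _))
  have : Algebra.IsAlgebraic S K := by
    rw [hb.isAlgebraic_iff]
    intro i
    fin_cases i
    · exact hEa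
    · exact hsa
  refine (Algebra.IsAlgebraic.isTranscendenceBasis_of_lift_le_trdeg_of_finite k ![x ^ c, y ^ d]
    ?_).1
  exact hb.lift_cardinalMk_eq_trdeg.le

lemma xab_eqn {K : Type*} [Field K] (p ν : ℕ) [CharP K p] (hp : p.Prime) (hp3 : 3 ≤ p)
    (A C D r x y : K) (hD : D ≠ 0) (hr : r = C / D) (hA1 : A ≠ 1) (hr1 : r ≠ 1)
    (hx : x = (A + 1) / (A - 1)) (hy : y = (r + 1) / (r - 1))
    (h : A ^ (p ^ ν) + A = C * D ^ (p ^ ν) + C ^ (p ^ ν) * D) :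
    ∃ z : K, z ^ 2 = (x ^ (p ^ ν + 1) - 1) * (y ^ (p ^ ν + 1) - 1) := by
  have : Fact p.Prime := ⟨hp⟩
  have hA1' := sub_ne_zero.2 hA1
  have hCD : C - D ≠ 0 := by
    intro h0
    rw [sub_eq_zero] at h0
    exact hr1 (by rw [hr, h0, div_self hD])
  have hy' : y = (C + D) / (C - D) := by
    have hr1' := sub_ne_zero.2 hr1
    rw [hy, div_eq_div_iff hr1' hCD, hr]
    field_simp
  have hodd : Odd (p ^ ν) := (hp.odd_of_ne_two (by omega)).pow
  obtain ⟨j, hj⟩ := hodd.add_one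
  have key : x ^ (p ^ ν + 1) - 1 =
      ((C - D) / (A - 1)) ^ (p ^ ν + 1) * (y ^ (p ^ ν + 1) - 1) := by
    have e1 : (A + 1) ^ (p ^ ν + 1) - (A - 1) ^ (p ^ ν + 1) =
        (C + D) ^ (p ^ ν + 1) - (C - D) ^ (p ^ ν + 1) := by
      simp only [pow_succ _ (p ^ ν), add_pow_char_pow, sub_pow_char_pow, one_pow]
      linear_combination 2 * h
    have hA2 := pow_ne_zero (p ^ ν + 1) hA1'
    have hC2 := pow_ne_zero (p ^ ν + 1) hCD
    rw [hx, hy', div_pow, div_pow, div_pow]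
    field_simp
    linear_combination e1
  refine ⟨((C - D) / (A - 1)) ^ j * (y ^ (p ^ ν + 1) - 1), ?_⟩
  rw [key, hj]
  ring

lemma xab_param (k : Type*) [Field k] [IsAlgClosed k]
    (p ν : ℕ) [CharP k p] (hp : p.Prime) (hp3 : 3 ≤ p) (hν : 0 < ν)
    (c d : ℕ) (hc : 0 < c) (hd : 0 < d) :
    ∃ x y z : FractionRing (MvPolynomial (Fin 2) k),
      AlgebraicIndependent k ![x ^ c, y ^ d] ∧
      z ^ 2 = (x ^ (p ^ ν + 1) - 1) * (y ^ (p ^ ν + 1) - 1) := by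
  have : Fact p.Prime := ⟨hp⟩
  set K := FractionRing (MvPolynomial (Fin 2) k) with hK
  have hinj : Function.Injective (algebraMap (MvPolynomial (Fin 2) k) K) :=
    IsFractionRing.injective _ _
  have : CharP K p := charP_of_injective_algebraMap (algebraMap k K).injective p
  have h2k : (2 : k) ≠ 0 := by
    intro h
    have h' := (CharP.cast_eq_zero_iff k p 2).1 (by exact_mod_cast h)
    have := Nat.le_of_dvd (by norm_num) h'
    omega
  have h2 : (2 : K) ≠ 0 := by
    intro h
    have h' := (CharP.cast_eq_zero_iff K p 2).1 (by exact_mod_cast h)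
    have := Nat.le_of_dvd (by norm_num) h'
    omega
  set q := p ^ ν with hqdef
  have hq : 1 < q := Nat.one_lt_pow hν.ne' hp.one_lt
  have hqq : 1 < q ^ 2 := Nat.one_lt_pow two_ne_zero hq
  set E : K := algebraMap _ K (X 0 : MvPolynomial (Fin 2) k) with hE
  set s : K := algebraMap _ K (X 1 : MvPolynomial (Fin 2) k) with hs
  have hbasis : IsTranscendenceBasis k ![E, s] := by
    have : Algebra.IsAlgebraic (MvPolynomial (Fin 2) k) K :=
      IsLocalization.isAlgebraic _ (nonZeroDivisors (MvPolynomial (Fin 2) k))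
    have := (IsTranscendenceBasis.mvPolynomial (Fin 2) k).algebraMap_comp (A := K)
    convert this using 1
    ext i
    fin_cases i <;> rfl
  have hs0 : s ≠ 0 := by
    rw [hs, Ne, map_eq_zero_iff _ hinj]
    exact X_ne_zero _
  have hΔ : s ^ (q ^ 2) - s ≠ 0 := by
    rw [hs, ← map_pow, ← map_sub, Ne, map_eq_zero_iff _ hinj]
    intro h
    have := congrArg (aeval (fun _ => (Polynomial.X : Polynomial k))) h
    simp only [map_sub, map_pow, aeval_X, map_zero] at this
    exact FiniteField.X_pow_card_sub_X_ne_zero k hqq this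
  obtain ⟨C0, hC⟩ : ∃ C0 : K, C0 = (E ^ q + E) / (s ^ (q ^ 2) - s) := ⟨_, rfl⟩
  have hC' : C0 * (s ^ (q ^ 2) - s) = E ^ q + E := by rw [hC, div_mul_cancel₀ _ hΔ]
  obtain ⟨A, hA⟩ : ∃ A : K, A = E + C0 * s := ⟨_, rfl⟩
  obtain ⟨r, hr⟩ : ∃ r : K, r = C0 / s ^ q := ⟨_, rfl⟩
  have hrC : C0 = r * s ^ q := by rw [hr, div_mul_cancel₀ _ (pow_ne_zero _ hs0)]
  have hA1 : A ≠ 1 := by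
    intro h
    have h1 : E * (s ^ (q ^ 2) - s) + (E ^ q + E) * s = s ^ (q ^ 2) - s := by
      linear_combination (s ^ (q ^ 2) - s) * (h - hA) - s * hC'
    rw [hE, hs] at h1
    simp only [← map_pow, ← map_sub, ← map_mul, ← map_add] at h1
    have := congrArg (aeval ![0, (Polynomial.X : Polynomial k)]) (hinj h1)
    have hq0 : q ≠ 0 := by omega
    simp [hq0] at this
    exact FiniteField.X_pow_card_sub_X_ne_zero k hqq this.symm
  have hrtr : ¬ IsAlgebraic k r := by
    intro h
    obtain ⟨c0, hc0⟩ : ∃ c0 : k, algebraMap k K c0 = r := by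
      have := h.isIntegral
      exact minpoly.mem_range_of_degree_eq_one k r
        (IsAlgClosed.degree_eq_one_of_irreducible k (minpoly.irreducible this))
    have h1 : algebraMap k K c0 * s ^ q * (s ^ (q ^ 2) - s) = E ^ q + E := by
      rw [hc0, ← hrC, hC']
    rw [hE, hs, IsScalarTower.algebraMap_apply k (MvPolynomial (Fin 2) k) K] at h1
    simp only [← map_pow, ← map_sub, ← map_mul, ← map_add] at h1
    have := congrArg (eval ![1, (0 : k)]) (hinj h1)
    have hq0 : q ≠ 0 := by omega
    simp [hq0] at this
    apply h2k
    rw [← one_add_one_eq_two, ← this]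
  have hr1 : r ≠ 1 := fun h => hrtr (h ▸ isAlgebraic_one)
  have hrq : r ^ q + r ≠ 0 := by
    intro h
    apply hrtr
    refine ⟨Polynomial.X ^ q + Polynomial.X, ?_, by simpa using h⟩
    intro h0
    have := congrArg (Polynomial.eval 1) h0
    simp at this
    exact h2k (by rw [← one_add_one_eq_two]; exact this)
  have hfrob : A ^ q = E ^ q + C0 ^ q * s ^ q := by
    rw [hA, hqdef, add_pow_char_pow, mul_pow]
  obtain ⟨z, hz⟩ := xab_eqn p ν hp hp3 A C0 (s ^ q) r _ _ (pow_ne_zero _ hs0) hr hA1 hr1 rfl rfl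
    (by
      rw [← hqdef, hfrob, hA]
      rw [← pow_mul, ← pow_two]
      linear_combination -hC')
  refine ⟨_, _, z, ?_, hz⟩
  refine xab_indep E s A r _ _ q c d hq hc hd hbasis hA1 hr1 hrq h2 rfl rfl ?_ ?_
  · rw [hA, hrC]; ring
  · rw [hfrob, hA]
    have e2 : C0 ^ q = r ^ q * s ^ (q ^ 2) := by rw [hrC, mul_pow, ← pow_mul, ← pow_two]
    have e3 : s ^ (q * (q + 1)) = s ^ (q ^ 2) * s ^ q := by ring
    rw [e2, e3]
    rw [hrC] at hC' ⊢
    linear_combination hC'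

/-- Let `k` be an algebraically closed field of characteristic `p ≥ 3`, let `a, b` be
positive integers, `m = lcm(a,b)`, and suppose `p^ν ≡ −1 (mod m)` for some positive `ν`.
Then the surface `X_{a,b} : z² = (xᵃ − 1)(yᵇ − 1)` is unirational: its coordinate ring is
an integral domain, and there is an injective `k`-algebra homomorphism from its fraction
field into the fraction field `k(t₁, t₂)` of the polynomial ring in two variables. -/
theorem stmt_11 (k : Type*) [Field k] [IsAlgClosed k]
    (p : ℕ) [CharP k p] (hp : p.Prime) (hp3 : 3 ≤ p)
    (a b : ℕ) (ha : 0 < a) (hb : 0 < b)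
    (hν : ∃ ν : ℕ, 0 < ν ∧ Nat.lcm a b ∣ p ^ ν + 1) :
    IsDomain (XabRing k a b) ∧
    ∃ φ : FractionRing (XabRing k a b) →+* FractionRing (MvPolynomial (Fin 2) k),
      Function.Injective φ ∧
      ∀ c : k,
        φ (algebraMap (XabRing k a b) (FractionRing (XabRing k a b))
            (Ideal.Quotient.mk (Ideal.span {xabPoly k a b}) (C c))) =
        algebraMap (MvPolynomial (Fin 2) k) (FractionRing (MvPolynomial (Fin 2) k)) (C c) := by

  obtain ⟨ν, hν0, hdvd⟩ := hν
  obtain ⟨c, hc⟩ := (Nat.dvd_lcm_left a b).trans hdvd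
  obtain ⟨d, hd⟩ := (Nat.dvd_lcm_right a b).trans hdvd
  have hc0 : 0 < c := Nat.pos_of_ne_zero (by rintro rfl; simp at hc)
  have hd0 : 0 < d := Nat.pos_of_ne_zero (by rintro rfl; simp at hd)
  have hak : (a : k) ≠ 0 := by
    intro h
    have h1 := (CharP.cast_eq_zero_iff k p a).1 h
    have h2 : p ∣ p ^ ν + 1 := h1.trans ⟨c, hc⟩
    have h3 := (Nat.dvd_add_right (dvd_pow_self p hν0.ne')).1 h2
    exact hp.one_lt.ne' (Nat.dvd_one.1 h3)
  obtain ⟨x, y, z, hind, hz⟩ := xab_param k p ν hp hp3 hν0 c d hc0 hd0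
  have hz' : z ^ 2 = ((x ^ c) ^ a - 1) * ((y ^ d) ^ b - 1) := by
    rw [hz, ← pow_mul, ← pow_mul, mul_comm c, mul_comm d, ← hc, ← hd]
  let ψ : MvPolynomial (Fin 3) k →ₐ[k] FractionRing (MvPolynomial (Fin 2) k) := aeval ![x ^ c, y ^ d, z]
  have hren : ∀ f : MvPolynomial (Fin 2) k,
      ψ (rename ![0, 1] f) = aeval ![x ^ c, y ^ d] f := by
    intro f
    simp only [ψ, aeval_rename]
    congr 2
    ext i
    fin_cases i <;> rfl
  have hker : RingHom.ker ψ.toRingHom = Ideal.span {xabPoly k a b} := by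
    have hle : Ideal.span {xabPoly k a b} ≤ RingHom.ker ψ.toRingHom := by
      rw [Ideal.span_le, Set.singleton_subset_iff]
      change ψ _ = 0
      simp [ψ, xabPoly, hz']
    apply le_antisymm _ hle
    intro f hf
    obtain ⟨f0, f1, h⟩ := xab_reduce k a b f
    have h1 : ψ (f - (rename ![0, 1] f0 + rename ![0, 1] f1 * X 2)) = 0 := hle h
    have hf' : ψ f = 0 := hf
    have hX2 : ψ (X 2) = z := by simp [ψ]
    rw [map_sub, hf', map_add, map_mul, hren, hren, hX2] at h1
    have h2 : f0 ^ 2 = f1 ^ 2 * ((X 0 ^ a - 1) * (X 1 ^ b - 1)) := by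
      apply hind
      simp only [map_pow, map_mul, map_sub, map_one, aeval_X, Matrix.cons_val_zero,
        Matrix.cons_val_one]
      rw [← hz']
      linear_combination (-(aeval ![x ^ c, y ^ d] f0) + aeval ![x ^ c, y ^ d] f1 * z) * h1
    have h3 := xab_nonsq k a b hak hb f0 f1 h2
    subst h3
    have h4 : f0 = 0 := by simpa using h2
    subst h4
    simpa using h
  have hprime : (Ideal.span {xabPoly k a b}).IsPrime := hker ▸ RingHom.ker_isPrime _
  have hdom : IsDomain (XabRing k a b) := Ideal.Quotient.isDomain _
  refine ⟨hdom, ?_⟩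
  let g : XabRing k a b →+* FractionRing (MvPolynomial (Fin 2) k) := Ideal.Quotient.lift _ ψ.toRingHom
    (fun f hf => by rw [← hker] at hf; exact hf)
  have hg : Function.Injective g := by
    apply RingHom.lift_injective_of_ker_le_ideal
    exact hker.le
  refine ⟨IsFractionRing.lift hg, RingHom.injective _, ?_⟩
  intro c'
  rw [IsFractionRing.lift_algebraMap]
  simp only [g, Ideal.Quotient.lift_mk]
  change ψ (C c') = _
  simp only [ψ, aeval_C]
  exact IsScalarTower.algebraMap_apply k (MvPolynomial (Fin 2) k) _ c'
end

section
/- Let 𝓜 = {3, 5, 7, 8, 13, 17, 29, 31, 37, 41, 43, 44, 73} and let M = lcm of the elements of 𝓜 (so M = 8·3·5·7·11·13·17·29·31·37·41·43·73). Let S be the set of units u of ℤ/Mℤ such that for every m ∈ 𝓜 and every positive integer ν, the image of u^ν under the canonical ring homomorphism ℤ/Mℤ → ℤ/mℤ is not equal to −1. Then 2^25 · |S| = 5 · φ(M), where φ is Euler's totient function. -/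
/-- The set of Fermat degrees `𝓜 = {3, 5, 7, 8, 13, 17, 29, 31, 37, 41, 43, 44, 73}`. -/
def fermatDegrees : Finset ℕ := {3, 5, 7, 8, 13, 17, 29, 31, 37, 41, 43, 44, 73}

def HasCount (n : ℕ) (P : ℕ → Prop) (c : ℕ) : Prop :=
  (∀ k, P (k % n) ↔ P k) ∧ {k | k < n ∧ P k}.ncard = c

theorem HasCount.mul {a b c d : ℕ} {P Q : ℕ → Prop} (hP : HasCount a P c) (hQ : HasCount b Q d)
    (hab : Nat.Coprime a b) (ha : 0 < a) (hb : 0 < b) :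
    HasCount (a * b) (fun k => P k ∧ Q k) (c * d) := by
  obtain ⟨hP, rfl⟩ := hP
  obtain ⟨hQ, rfl⟩ := hQ
  refine ⟨fun k => ?_, ?_⟩
  · have h1 := hP (k % (a * b))
    have h2 := hQ (k % (a * b))
    rw [Nat.mod_mul_right_mod, hP] at h1
    rw [Nat.mod_mul_left_mod, hQ] at h2
    simp only [h1, h2]
  · rw [← Set.ncard_prod]
    refine Set.ncard_congr (fun k _ => (k % a, k % b)) ?_ ?_ ?_
    · rintro k ⟨_, h1, h2⟩
      exact ⟨⟨Nat.mod_lt _ ha, (hP k).2 h1⟩, ⟨Nat.mod_lt _ hb, (hQ k).2 h2⟩⟩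
    · rintro k l ⟨hk, _⟩ ⟨hl, _⟩ h
      simp only [Prod.mk.injEq] at h
      have : k ≡ l [MOD a * b] := (Nat.modEq_and_modEq_iff_modEq_mul hab).1 ⟨h.1, h.2⟩
      exact this.eq_of_lt_of_lt hk hl
    · rintro ⟨x, y⟩ ⟨⟨hx, hPx⟩, ⟨hy, hQy⟩⟩
      simp only at hx hPx hy hQy
      let z := Nat.chineseRemainder hab x y
      have h1 : (z : ℕ) % a = x := by
        have := z.2.1
        rwa [Nat.ModEq, Nat.mod_eq_of_lt hx] at this
      have h2 : (z : ℕ) % b = y := by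
        have := z.2.2
        rwa [Nat.ModEq, Nat.mod_eq_of_lt hy] at this
      refine ⟨z, ⟨Nat.chineseRemainder_lt_mul hab x y ha.ne' hb.ne', ?_, ?_⟩, ?_⟩
      · rw [← hP, h1]; exact hPx
      · rw [← hQ, h2]; exact hQy
      · simp only [h1, h2]

theorem hasCount_of_filter {n c : ℕ} {P : ℕ → Prop} [DecidablePred P]
    (hP : ∀ k, P (k % n) ↔ P k) (h : ((Finset.range n).filter P).card = c) :
    HasCount n P c := by
  refine ⟨hP, ?_⟩
  rw [← h, ← Set.ncard_coe_finset]
  congr 1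
  ext k
  simp

theorem hasCount_pow (p q c : ℕ)
    (h : ((Finset.range p).filter (fun k => k ^ q % p = 1)).card = c) :
    HasCount p (fun k => k ^ q % p = 1) c :=
  hasCount_of_filter (fun k => by rw [← Nat.pow_mod]) h

theorem no_neg_one {p q k : ℕ} (hp : 2 < p) (hq : Odd q) (h : k ^ q % p = 1) (ν : ℕ) :
    ¬ p ∣ k ^ ν + 1 := by
  intro hd
  have h1 : (k : ZMod p) ^ ν = -1 := by
    have := (ZMod.natCast_eq_zero_iff (k ^ ν + 1) p).2 hd
    push_cast at this
    exact eq_neg_of_add_eq_zero_left this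
  have h2 : (k : ZMod p) ^ q = 1 := by
    have : ((k ^ q : ℕ) : ZMod p) = ((1 : ℕ) : ZMod p) := by
      rw [ZMod.natCast_eq_natCast_iff', h, Nat.mod_eq_of_lt (by omega)]
    simpa using this
  have h3 : (-1 : ZMod p) = 1 := by
    rw [← hq.neg_one_pow, ← h1, ← pow_mul, mul_comm, pow_mul, h2, one_pow]
  have : Fact (2 < p) := ⟨hp⟩
  exact ZMod.neg_one_ne_one h3

theorem crit {p k : ℕ} (q : ℕ) (hp : 2 < p) (hq : Odd q)
    (hdec : ∀ r < p, r = 0 ∨ r ^ q % p = 1 ∨ ∃ i < 4, (r ^ (q * 2 ^ i) + 1) % p = 0) :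
    (¬ p ∣ k ∧ ∀ ν, 0 < ν → ¬ p ∣ k ^ ν + 1) ↔ k ^ q % p = 1 := by
  constructor
  · rintro ⟨h0, h⟩
    rcases hdec (k % p) (Nat.mod_lt _ (by omega)) with h1 | h1 | ⟨i, _, h1⟩
    · exact absurd (Nat.dvd_of_mod_eq_zero h1) h0
    · rwa [← Nat.pow_mod] at h1
    · refine absurd (Nat.dvd_of_mod_eq_zero ?_) (h (q * 2 ^ i) (by have := hq.pos; positivity))
      rw [Nat.add_mod, ← Nat.pow_mod, ← Nat.add_mod] at h1
      exact h1
  · intro h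
    refine ⟨fun hd => ?_, fun ν _ => no_neg_one hp hq h ν⟩
    have := Nat.dvd_of_mod_eq_zero (Nat.mod_eq_zero_of_dvd (hd.trans (dvd_pow_self k hq.pos.ne')))
    rw [Nat.mod_eq_zero_of_dvd this] at h
    omega

def R (k : ℕ) : Prop :=
  ((k % 8 = 1 ∨ k % 8 = 5) ∧ k % 11 ≠ 0) ∨ (k % 8 = 3 ∧ k ^ 5 % 11 = 1)

instance : DecidablePred R := fun k => by unfold R; infer_instance

theorem R_mod (k : ℕ) : R (k % 88) ↔ R k := by
  unfold R
  rw [Nat.mod_mod_of_dvd k (by norm_num : 8 ∣ 88), Nat.mod_mod_of_dvd k (by norm_num : 11 ∣ 88),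
    Nat.pow_mod (k % 88) 5 11, Nat.mod_mod_of_dvd k (by norm_num : 11 ∣ 88), ← Nat.pow_mod]

theorem hasCount_R : HasCount 88 R 25 := hasCount_of_filter R_mod (by decide +kernel)

theorem crit_R {k : ℕ} :
    ((¬ 2 ∣ k ∧ ¬ 11 ∣ k) ∧ (∀ ν, 0 < ν → ¬ 8 ∣ k ^ ν + 1) ∧ (∀ ν, 0 < ν → ¬ 44 ∣ k ^ ν + 1))
      ↔ R k := by
  constructor
  · rintro ⟨⟨h2, h11⟩, h8, h44⟩
    have hdec : ∀ r < 88, r % 2 = 0 ∨ r % 11 = 0 ∨ R r ∨ (r ^ 1 + 1) % 8 = 0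
        ∨ (r ^ 5 + 1) % 44 = 0 := by decide +kernel
    rcases hdec (k % 88) (Nat.mod_lt _ (by omega)) with h | h | h | h | h
    · omega
    · omega
    · exact (R_mod k).1 h
    · exact absurd (by rw [pow_one] at h ⊢; omega) (h8 1 one_pos)
    · refine absurd (Nat.dvd_of_mod_eq_zero ?_) (h44 5 (by omega))
      rw [Nat.add_mod, Nat.pow_mod, Nat.mod_mod_of_dvd k (by norm_num : 44 ∣ 88), ← Nat.pow_mod,
        ← Nat.add_mod] at h
      exact h
  · intro h
    have h8 : k % 8 = 1 ∨ k % 8 = 5 ∨ k % 8 = 3 := by unfold R at h; tauto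
    have h11 : ¬ 11 ∣ k := by
      rcases h with h | h
      · omega
      · intro hd
        have := h.2
        rw [Nat.pow_mod, Nat.mod_eq_zero_of_dvd hd] at this
        omega
    refine ⟨⟨by omega, h11⟩, ?_, ?_⟩
    · intro ν _
      have : k ^ ν % 8 = 1 ∨ k ^ ν % 8 = k % 8 := by
        induction ν with
        | zero => simp
        | succ n ih =>
          rcases Nat.eq_zero_or_pos n with rfl | hn
          · simp
          · rw [pow_succ, Nat.mul_mod]
            rcases ih hn with e | e <;> rw [e] <;> rcases h8 with e' | e' | e' <;> rw [e'] <;> simp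
      omega
    · intro ν _ hd
      rcases h with ⟨h, _⟩ | ⟨_, h⟩
      · have : k ^ ν % 4 = 1 := by
          rw [Nat.pow_mod, show k % 4 = 1 by omega]; simp
        omega
      · exact no_neg_one (by norm_num) (by decide) h ν ((by norm_num : 11 ∣ 44).trans hd)

def Good (k : ℕ) : Prop :=
  (((((((((((R k) ∧ k ^ 1 % 3 = 1) ∧ k ^ 1 % 5 = 1) ∧ k ^ 3 % 7 = 1) ∧ k ^ 3 % 13 = 1) ∧ k ^ 1 % 17 = 1) ∧ k ^ 7 % 29 = 1) ∧ k ^ 15 % 31 = 1) ∧ k ^ 9 % 37 = 1) ∧ k ^ 5 % 41 = 1) ∧ k ^ 21 % 43 = 1) ∧ k ^ 9 % 73 = 1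

theorem hasCount_Good : HasCount (88 * 3 * 5 * 7 * 13 * 17 * 29 * 31 * 37 * 41 * 43 * 73) Good (25 * 1 * 1 * 3 * 3 * 1 * 7 * 15 * 9 * 5 * 21 * 9) :=
  ((((((((((((((((((((((hasCount_R).mul (hasCount_pow 3 1 1 (by decide +kernel))
    (by norm_num) (by norm_num) (by norm_num))).mul (hasCount_pow 5 1 1 (by decide +kernel))
    (by norm_num) (by norm_num) (by norm_num))).mul (hasCount_pow 7 3 3 (by decide +kernel))
    (by norm_num) (by norm_num) (by norm_num))).mul (hasCount_pow 13 3 3 (by decide +kernel))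
    (by norm_num) (by norm_num) (by norm_num))).mul (hasCount_pow 17 1 1 (by decide +kernel))
    (by norm_num) (by norm_num) (by norm_num))).mul (hasCount_pow 29 7 7 (by decide +kernel))
    (by norm_num) (by norm_num) (by norm_num))).mul (hasCount_pow 31 15 15 (by decide +kernel))
    (by norm_num) (by norm_num) (by norm_num))).mul (hasCount_pow 37 9 9 (by decide +kernel))
    (by norm_num) (by norm_num) (by norm_num))).mul (hasCount_pow 41 5 5 (by decide +kernel))
    (by norm_num) (by norm_num) (by norm_num))).mul (hasCount_pow 43 21 21 (by decide +kernel))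
    (by norm_num) (by norm_num) (by norm_num))).mul (hasCount_pow 73 9 9 (by decide +kernel))
    (by norm_num) (by norm_num) (by norm_num))

theorem lcm_val : fermatDegrees.lcm id = 8741799333747480 := by decide +kernel

theorem coprime_iff {k : ℕ} : Nat.Coprime k 8741799333747480 ↔ (¬ 2 ∣ k ∧ ¬ 11 ∣ k) ∧ ¬ 3 ∣ k ∧ ¬ 5 ∣ k ∧ ¬ 7 ∣ k ∧ ¬ 13 ∣ k ∧ ¬ 17 ∣ k ∧ ¬ 29 ∣ k ∧ ¬ 31 ∣ k ∧ ¬ 37 ∣ k ∧ ¬ 41 ∣ k ∧ ¬ 43 ∣ k ∧ ¬ 73 ∣ k := by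
  have hp : ∀ p : ℕ, p.Prime → (Nat.Coprime k p ↔ ¬ p ∣ k) := fun p h => by
    rw [Nat.coprime_comm, h.coprime_iff_not_dvd]
  rw [show 8741799333747480 = 2 ^ 3 * 11 * 3 * 5 * 7 * 13 * 17 * 29 * 31 * 37 * 41 * 43 * 73 by norm_num]
  simp only [Nat.coprime_mul_iff_right, Nat.coprime_pow_right_iff (show 0 < 3 by norm_num)]
  rw [hp 2 (by norm_num), hp 11 (by norm_num), hp 3 (by norm_num), hp 5 (by norm_num), hp 7 (by norm_num), hp 13 (by norm_num), hp 17 (by norm_num), hp 29 (by norm_num), hp 31 (by norm_num), hp 37 (by norm_num), hp 41 (by norm_num), hp 43 (by norm_num), hp 73 (by norm_num)]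
  tauto

theorem Good_iff {k : ℕ} : Good k ↔ Nat.Coprime k 8741799333747480 ∧
    ∀ m ∈ fermatDegrees, ∀ ν, 0 < ν → ¬ m ∣ k ^ ν + 1 := by
  rw [coprime_iff]
  simp only [fermatDegrees, Finset.mem_insert, Finset.mem_singleton, forall_eq_or_imp, forall_eq]
  unfold Good
  rw [← crit_R, ← crit (p := 3) 1 (by norm_num) (by decide) (by decide +kernel),
    ← crit (p := 5) 1 (by norm_num) (by decide) (by decide +kernel),
    ← crit (p := 7) 3 (by norm_num) (by decide) (by decide +kernel),
    ← crit (p := 13) 3 (by norm_num) (by decide) (by decide +kernel),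
    ← crit (p := 17) 1 (by norm_num) (by decide) (by decide +kernel),
    ← crit (p := 29) 7 (by norm_num) (by decide) (by decide +kernel),
    ← crit (p := 31) 15 (by norm_num) (by decide) (by decide +kernel),
    ← crit (p := 37) 9 (by norm_num) (by decide) (by decide +kernel),
    ← crit (p := 41) 5 (by norm_num) (by decide) (by decide +kernel),
    ← crit (p := 43) 21 (by norm_num) (by decide) (by decide +kernel),
    ← crit (p := 73) 9 (by norm_num) (by decide) (by decide +kernel)]
  tauto

theorem image_eq (M : ℕ) (hM : M = 8741799333747480) :
    (fun u : (ZMod M)ˣ => (u : ZMod M).val) '' {u : (ZMod M)ˣ |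
          ∀ m ∈ fermatDegrees, ∀ h : m ∣ M, ∀ ν : ℕ, 0 < ν →
            ZMod.castHom h (ZMod m) ((u : ZMod M) ^ ν) ≠ -1} = {k | k < M ∧ Good k} := by
  have hM0 : NeZero M := ⟨by omega⟩
  have key : ∀ (x : ZMod M) (m : ℕ) (h : m ∣ M) (ν : ℕ),
      ZMod.castHom h (ZMod m) (x ^ ν) = -1 ↔ m ∣ x.val ^ ν + 1 := by
    intro x m h ν
    rw [← ZMod.natCast_eq_zero_iff]
    conv_lhs => rw [← ZMod.natCast_zmod_val x]
    rw [map_pow, map_natCast]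
    push_cast
    exact eq_neg_iff_add_eq_zero
  have hdvd : ∀ m ∈ fermatDegrees, m ∣ M := by
    intro m hm
    rw [hM, ← lcm_val]
    exact Finset.dvd_lcm (f := id) hm
  ext k
  simp only [Set.mem_image, Set.mem_setOf_eq, Good_iff, ← hM, ne_eq, key]
  constructor
  · rintro ⟨u, hu, rfl⟩
    exact ⟨ZMod.val_lt _, ZMod.val_coe_unit_coprime u, fun m hm => hu m hm (hdvd m hm)⟩
  · rintro ⟨hk, hc, h⟩
    refine ⟨ZMod.unitOfCoprime k hc, ?_, ?_⟩
    · rw [ZMod.coe_unitOfCoprime, ZMod.val_natCast_of_lt hk]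
      exact fun m hm _ => h m hm
    · rw [ZMod.coe_unitOfCoprime, ZMod.val_natCast_of_lt hk]

theorem tot : Nat.totient 8741799333747480 = 40 * 2 * 4 * 6 * 12 * 16 * 28 * 30 * 36 * 40 * 42 * 72 := by
  rw [show 8741799333747480 = 2 ^ 3 * 11 * 3 * 5 * 7 * 13 * 17 * 29 * 31 * 37 * 41 * 43 * 73 by norm_num]
  rw [Nat.totient_mul (by norm_num), Nat.totient_mul (by norm_num), Nat.totient_mul (by norm_num), Nat.totient_mul (by norm_num), Nat.totient_mul (by norm_num), Nat.totient_mul (by norm_num), Nat.totient_mul (by norm_num), Nat.totient_mul (by norm_num), Nat.totient_mul (by norm_num), Nat.totient_mul (by norm_num), Nat.totient_mul (by norm_num), Nat.totient_mul (by norm_num), Nat.totient_prime_pow (by norm_num) (by norm_num)]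
  rw [Nat.totient_prime (show Nat.Prime 11 by norm_num), Nat.totient_prime (show Nat.Prime 3 by norm_num), Nat.totient_prime (show Nat.Prime 5 by norm_num), Nat.totient_prime (show Nat.Prime 7 by norm_num), Nat.totient_prime (show Nat.Prime 13 by norm_num), Nat.totient_prime (show Nat.Prime 17 by norm_num), Nat.totient_prime (show Nat.Prime 29 by norm_num), Nat.totient_prime (show Nat.Prime 31 by norm_num), Nat.totient_prime (show Nat.Prime 37 by norm_num), Nat.totient_prime (show Nat.Prime 41 by norm_num), Nat.totient_prime (show Nat.Prime 43 by norm_num), Nat.totient_prime (show Nat.Prime 73 by norm_num)]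
  norm_num

/-- Let `M` be the lcm of the elements of `𝓜` (so `M = 8·3·5·7·11·13·17·29·31·37·41·43·73`)
and let `S` be the set of units `u` of `ℤ/M` such that for every `m ∈ 𝓜` and every positive
integer `ν`, the image of `u^ν` under the canonical ring homomorphism `ℤ/M → ℤ/m` is not
`−1`. Then `2^25 · |S| = 5 · φ(M)`. -/
theorem stmt_14 :
    fermatDegrees.lcm id = 8 * 3 * 5 * 7 * 11 * 13 * 17 * 29 * 31 * 37 * 41 * 43 * 73 ∧
    2 ^ 25 *
        {u : (ZMod (fermatDegrees.lcm id))ˣ |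
          ∀ m ∈ fermatDegrees, ∀ h : m ∣ fermatDegrees.lcm id, ∀ ν : ℕ, 0 < ν →
            ZMod.castHom h (ZMod m) ((u : ZMod (fermatDegrees.lcm id)) ^ ν) ≠ -1}.ncard
      = 5 * Nat.totient (fermatDegrees.lcm id) := by
  refine ⟨by rw [lcm_val], ?_⟩
  have hinj : Function.Injective
      (fun u : (ZMod (fermatDegrees.lcm id))ˣ => (u : ZMod (fermatDegrees.lcm id)).val) := by
    have : NeZero (fermatDegrees.lcm id) := ⟨by rw [lcm_val]; norm_num⟩
    exact (ZMod.val_injective _).comp Units.val_injective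
  rw [← Set.ncard_image_of_injective _ hinj, image_eq _ lcm_val, lcm_val, tot]
  have h := hasCount_Good.2
  norm_num only at h ⊢
  rw [h]
end

section
/- The number 67665781 is prime; for every m ∈ 𝓜 = {3, 5, 7, 8, 13, 17, 29, 31, 37, 41, 43, 44, 73} and every positive integer ν, one has 67665781^ν ≢ −1 (mod m); and every prime q with 2 < q < 67665781 satisfies: there exist m ∈ 𝓜 and a positive integer ν with q^ν ≡ −1 (mod m). -/
namespace Horikawa

lemma key (m : ℕ) (L : List ℕ) (hm0 : 0 < m)
    (hm : ∀ r < m, Nat.gcd r m = 1 → r ∉ L → ∃ v < m, (r ^ (v + 1) + 1) % m = 0)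
    (q : ℕ) (hq : Nat.Coprime q m) (h : ∀ ν : ℕ, 0 < ν → ¬ m ∣ q ^ ν + 1) :
    q % m ∈ L := by
  by_contra hL
  have hg : Nat.gcd (q % m) m = 1 := by
    rw [← Nat.gcd_rec, Nat.gcd_comm]; exact hq
  obtain ⟨v, -, hv⟩ := hm (q % m) (Nat.mod_lt _ hm0) hg hL
  refine h (v + 1) (Nat.succ_pos _) (Nat.dvd_of_mod_eq_zero ?_)
  have : (q ^ (v + 1) + 1) ≡ ((q % m) ^ (v + 1) + 1) [MOD m] :=
    Nat.ModEq.add_right 1 (Nat.ModEq.pow _ (Nat.mod_modEq q m).symm)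
  rw [this]; exact hv

lemma notdvd (m p r k : ℕ) (hr : p % m = r) (hk : r ^ k % m = 1 % m)
    (hall : ∀ v < k, (r ^ v + 1) % m ≠ 0) (hk0 : 0 < k) (ν : ℕ) : ¬ m ∣ p ^ ν + 1 := by
  intro hd
  apply hall (ν % k) (Nat.mod_lt _ hk0)
  have h1 : p ≡ r [MOD m] := by rw [← hr]; exact (Nat.mod_modEq p m).symm
  have h2 : r ^ ν ≡ r ^ (ν % k) [MOD m] := by
    conv_lhs => rw [← Nat.mod_add_div ν k, pow_add, pow_mul]
    have h3 : (r ^ k) ^ (ν / k) ≡ 1 ^ (ν / k) [MOD m] := Nat.ModEq.pow _ hk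
    simpa using Nat.ModEq.mul_left (r ^ (ν % k)) h3
  have h4 : p ^ ν + 1 ≡ r ^ (ν % k) + 1 [MOD m] :=
    Nat.ModEq.add_right 1 ((Nat.ModEq.pow _ h1).trans h2)
  rw [← h4]
  exact Nat.mod_eq_zero_of_dvd hd

/-- Survivor test for the remaining moduli. -/
def surv (q : ℕ) : Bool :=
  [1, 3, 9].contains (q % 13) && [1, 2, 4].contains (q % 7) &&
  [1, 7, 9, 10, 12, 16, 26, 33, 34].contains (q % 37) &&
  [1, 7, 16, 20, 23, 24, 25].contains (q % 29) &&
  [1, 2, 4, 5, 7, 8, 9, 10, 14, 16, 18, 19, 20, 25, 28].contains (q % 31) &&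
  [1, 4, 6, 9, 10, 11, 13, 14, 15, 16, 17, 21, 23, 24, 25, 31, 35, 36, 38, 40, 41].contains
    (q % 43) &&
  [1, 3, 5, 9, 13, 15, 17, 21, 23, 25, 27, 29, 31, 37, 41].contains (q % 44)

def final (q : ℕ) : Bool :=
  !(surv q) || Nat.beq q 1 || Nat.beq q 60050461 || Nat.ble 67665781 q

def checkAll : Bool :=
  [1, 1021, 1531].all fun a => [1, 10, 16, 18, 37].all fun b =>
    [1, 2, 4, 8, 16, 32, 37, 55, 64].all fun c =>
      [0, 1, 2, 3, 4, 5, 6, 7, 8, 9, 10, 11].all fun t =>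
        final (6105720 * t + (410041 * a + 5361120 * b + 334560 * c) % 6105720)

set_option maxRecDepth 100000 in
lemma checkAll_eq : checkAll = true := by decide +kernel

lemma crt (q : ℕ) : q % 6105720 =
    (410041 * (q % 2040) + 5361120 * (q % 41) + 334560 * (q % 73)) % 6105720 := by
  omega

lemma r2040 (q : ℕ) (h3 : q % 3 = 1) (h5 : q % 5 = 1) (h17 : q % 17 = 1)
    (h8 : q % 8 = 1 ∨ q % 8 = 3 ∨ q % 8 = 5) :
    q % 2040 = 1 ∨ q % 2040 = 1021 ∨ q % 2040 = 1531 := by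
  omega

set_option maxRecDepth 100000 in
lemma small : ∀ q < 74, 2 < q → Nat.Prime q → ∃ m ∈ fermatDegrees, ∃ v < 74,
    (q ^ (v + 1) + 1) % m = 0 := by
  decide +kernel

set_option maxRecDepth 100000 in
lemma large (q : ℕ) (hp : Nat.Prime q) (h73 : 73 < q) (hlt : q < 67665781) :
    ∃ m ∈ fermatDegrees, ∃ ν : ℕ, 0 < ν ∧ m ∣ q ^ ν + 1 := by
  by_contra hcon
  push Not at hcon
  have hc : ∀ m, 0 < m → m ≤ 73 → Nat.Coprime q m := fun m h0 h =>
    Nat.coprime_of_lt_prime (by omega) (by omega) hp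
  have hc44 := hc 44 (by norm_num) (by norm_num)
  have k3 := key 3 [1] (by norm_num) (by decide +kernel) q (hc 3 (by norm_num) (by norm_num)) (hcon 3 (by decide))
  have k5 := key 5 [1] (by norm_num) (by decide +kernel) q (hc 5 (by norm_num) (by norm_num)) (hcon 5 (by decide))
  have k17 := key 17 [1] (by norm_num) (by decide +kernel) q (hc 17 (by norm_num) (by norm_num)) (hcon 17 (by decide))
  have k8 := key 8 [1, 3, 5] (by norm_num) (by decide +kernel) q (hc 8 (by norm_num) (by norm_num)) (hcon 8 (by decide))
  have k41 := key 41 [1, 10, 16, 18, 37] (by norm_num) (by decide +kernel) q (hc 41 (by norm_num) (by norm_num)) (hcon 41 (by decide))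
  have k73 := key 73 [1, 2, 4, 8, 16, 32, 37, 55, 64] (by norm_num) (by decide +kernel) q (hc 73 (by norm_num) (by norm_num)) (hcon 73 (by decide))
  have k7 := key 7 [1, 2, 4] (by norm_num) (by decide +kernel) q (hc 7 (by norm_num) (by norm_num)) (hcon 7 (by decide))
  have k13 := key 13 [1, 3, 9] (by norm_num) (by decide +kernel) q (hc 13 (by norm_num) (by norm_num)) (hcon 13 (by decide))
  have k37 := key 37 [1, 7, 9, 10, 12, 16, 26, 33, 34] (by norm_num) (by decide +kernel) q (hc 37 (by norm_num) (by norm_num)) (hcon 37 (by decide))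
  have k29 := key 29 [1, 7, 16, 20, 23, 24, 25] (by norm_num) (by decide +kernel) q (hc 29 (by norm_num) (by norm_num)) (hcon 29 (by decide))
  have k31 := key 31 [1, 2, 4, 5, 7, 8, 9, 10, 14, 16, 18, 19, 20, 25, 28] (by norm_num) (by decide +kernel) q (hc 31 (by norm_num) (by norm_num)) (hcon 31 (by decide))
  have k43 := key 43 [1, 4, 6, 9, 10, 11, 13, 14, 15, 16, 17, 21, 23, 24, 25, 31, 35, 36, 38, 40, 41] (by norm_num) (by decide +kernel) q (hc 43 (by norm_num) (by norm_num)) (hcon 43 (by decide))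
  have k44 := key 44 [1, 3, 5, 9, 13, 15, 17, 21, 23, 25, 27, 29, 31, 37, 41] (by norm_num) (by decide +kernel) q hc44 (hcon 44 (by decide))
  have hs : surv q = true := by
    unfold surv
    simp only [Bool.and_eq_true, List.contains_iff_mem]
    exact ⟨⟨⟨⟨⟨⟨k13, k7⟩, k37⟩, k29⟩, k31⟩, k43⟩, k44⟩
  have k2040 : q % 2040 ∈ [1, 1021, 1531] := by
    simp only [List.mem_cons, List.not_mem_nil, or_false] at k3 k5 k17 k8 ⊢
    exact r2040 q k3 k5 k17 k8
  have ht : q / 6105720 ∈ [0, 1, 2, 3, 4, 5, 6, 7, 8, 9, 10, 11] := by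
    simp only [List.mem_cons, List.not_mem_nil, or_false]
    omega
  have hall := checkAll_eq
  unfold checkAll at hall
  have hf := List.all_eq_true.1 (List.all_eq_true.1 (List.all_eq_true.1
    (List.all_eq_true.1 hall _ k2040) _ k41) _ k73) _ ht
  rw [← crt, Nat.div_add_mod] at hf
  unfold final at hf
  rw [hs] at hf
  simp only [Bool.not_true, Bool.false_or, Bool.or_eq_true, Nat.beq_eq, Nat.ble_eq] at hf
  rcases hf with (h | h) | h
  · omega
  · subst h
    exact absurd hp (by norm_num)
  · omega

end Horikawa

theorem stmt_15 :
    Nat.Prime 67665781 ∧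
    (∀ m ∈ fermatDegrees, ∀ ν : ℕ, 0 < ν → ¬ (m ∣ 67665781 ^ ν + 1)) ∧
    (∀ q : ℕ, Nat.Prime q → 2 < q → q < 67665781 →
      ∃ m ∈ fermatDegrees, ∃ ν : ℕ, 0 < ν ∧ m ∣ q ^ ν + 1) := by
  refine ⟨by norm_num, ?_, ?_⟩
  · intro m hm ν _
    have hex : ∀ m ∈ fermatDegrees, ∃ k < 74, 0 < k ∧ (67665781 % m) ^ k % m = 1 % m ∧
        ∀ v < k, ((67665781 % m) ^ v + 1) % m ≠ 0 := by
      decide +kernel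
    obtain ⟨k, -, hk0, hk, hall⟩ := hex m hm
    exact Horikawa.notdvd m 67665781 _ k rfl hk hall hk0 ν
  · intro q hp h2 hlt
    by_cases h : q < 74
    · obtain ⟨m, hm, v, -, hv⟩ := Horikawa.small q h h2 hp
      exact ⟨m, hm, v + 1, Nat.succ_pos _, Nat.dvd_of_mod_eq_zero hv⟩
    · exact Horikawa.large q hp (by omega) hlt
end
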